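/- arXiv:quant-ph/0606225 — 3 statements merged into one kernel-verified Lean document; each statement's English description precedes it below -/
import Mathlib

section
/- Let ξ be a pure state on C⊗D and let 0 ≤ ε ≤ 1. If the largest eigenvalue of the reduced density operator ξ^C satisfies λ_max(ξ^C) ≥ 1−ε, then Tr[ ξ ( ξ^C ⊗ ξ^D ) ] ≥ (1−ε)³ ≥ 1−3ε, and consequently ‖ ξ − ξ^C ⊗ ξ^D ‖₁ ≤ 2√(3ε). -/
open Matrix
open scoped Kronecker ComplexOrder

/-- The positive semidefinite square root of a positive semidefinite matrix
(the definition of the older Mathlib, since removed). -/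
noncomputable def Matrix.PosSemidef.sqrt {n 𝕜 : Type*} [Fintype n] [RCLike 𝕜] [DecidableEq n]
    {A : Matrix n n 𝕜} (hA : A.PosSemidef) : Matrix n n 𝕜 :=
  hA.1.eigenvectorUnitary.1 * diagonal ((↑) ∘ Real.sqrt ∘ hA.1.eigenvalues) *
  (star hA.1.eigenvectorUnitary : Matrix n n 𝕜)

/-- Trace norm `‖M‖₁ = Tr √(Mᴴ M)` of a complex square matrix. -/
noncomputable def traceNorm {n : Type*} [Fintype n] [DecidableEq n] (M : Matrix n n ℂ) : ℝ :=
  ((Matrix.posSemidef_conjTranspose_mul_self M).sqrt.trace).re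

/-- The pure state `|v⟩⟨v|` associated to a vector `v`. -/
noncomputable def pureState {ι : Type*} (v : ι → ℂ) : Matrix ι ι ℂ :=
  Matrix.vecMulVec v (star v)

/-- Reduced state `ξ^C` of a pure state on `C ⊗ D`. -/
noncomputable def redC {ιC ιD : Type} [Fintype ιD] (ξ : ιC × ιD → ℂ) : Matrix ιC ιC ℂ :=
  Matrix.of fun i j => ∑ d : ιD, ξ (i, d) * star (ξ (j, d))

/-- Reduced state `ξ^D` of a pure state on `C ⊗ D`. -/
noncomputable def redD {ιC ιD : Type} [Fintype ιC] (ξ : ιC × ιD → ℂ) : Matrix ιD ιD ℂ :=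
  Matrix.of fun i j => ∑ c : ιC, ξ (c, i) * star (ξ (c, j))

/-!
Write the vector `ξ` as a `D × C` matrix `X`. Then `ξ^C = (Xᴴ X)ᵀ` and `ξ^D = X Xᴴ`, so that
`⟨ξ| ξ^C ⊗ ξ^D |ξ⟩ = Tr (Xᴴ X)³ = Tr (ξ^C)³ ≥ λ_max³`.

The trace-norm bound holds for a pure state `ψ` and any density operator `σ`: measuring in an
eigenbasis `u` of `ψ - σ` yields distributions `p i = |⟨u i|ψ⟩|²` and `q i = ⟨u i|σ|u i⟩` with
`‖ψ - σ‖₁ = ∑ |p i - q i|`. Cauchy–Schwarz bounds this by `2 √(1 - (∑ √(p i q i))²)`, and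
`⟨ψ|σ|ψ⟩ ≤ (∑ √(p i q i))²` by the triangle inequality for the seminorm `√⟨v|σ|v⟩`.
-/

section TraceNorm

variable {n : Type*} [Fintype n] [DecidableEq n]

theorem trace_cfc_eq_sum_eigenvalues {𝕜 : Type*} [RCLike 𝕜] {A : Matrix n n 𝕜}
    (hA : A.IsHermitian) (f : ℝ → ℝ) :
    (cfc f A).trace = ∑ i, (f (hA.eigenvalues i) : 𝕜) := by
  rw [hA.cfc_eq, Matrix.IsHermitian.cfc, Unitary.conjStarAlgAut_apply, trace_mul_comm,
    ← mul_assoc, Unitary.coe_star_mul_self, one_mul, trace_diagonal]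
  rfl

theorem trace_pow_eq_sum_eigenvalues_pow {𝕜 : Type*} [RCLike 𝕜] {A : Matrix n n 𝕜}
    (hA : A.IsHermitian) (k : ℕ) :
    (A ^ k).trace = ∑ i, (hA.eigenvalues i : 𝕜) ^ k := by
  have isSelfAdjoint : IsSelfAdjoint A := hA
  rw [← cfc_pow_id (R := ℝ) A k, trace_cfc_eq_sum_eigenvalues hA]
  push_cast
  rfl

theorem eigenvalues_pow_le_re_trace_pow {𝕜 : Type*} [RCLike 𝕜] {A : Matrix n n 𝕜}
    (hA : A.PosSemidef) (k : ℕ) (i : n) :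
    hA.isHermitian.eigenvalues i ^ k ≤ RCLike.re (A ^ k).trace := by
  rw [trace_pow_eq_sum_eigenvalues_pow hA.isHermitian]
  simp only [← RCLike.ofReal_pow, ← RCLike.ofReal_sum, RCLike.ofReal_re]
  exact Finset.single_le_sum (f := fun j => hA.isHermitian.eigenvalues j ^ k)
    (fun j _ => pow_nonneg (hA.eigenvalues_nonneg j) k) (Finset.mem_univ i)

theorem sqrt_conjTranspose_mul_self_eq_cfc_abs {M : Matrix n n ℂ} (hM : M.IsHermitian) :
    (posSemidef_conjTranspose_mul_self M).sqrt = cfc (fun x : ℝ => |x|) M := by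
  have isSelfAdjoint : IsSelfAdjoint M := hM
  calc (posSemidef_conjTranspose_mul_self M).sqrt
      = cfc Real.sqrt (Mᴴ * M) := ((posSemidef_conjTranspose_mul_self M).isHermitian.cfc_eq _).symm
    _ = cfc (fun x : ℝ => √(x ^ 2)) M := by rw [hM.eq, ← pow_two, ← cfc_comp_pow Real.sqrt 2 M]
    _ = cfc (fun x : ℝ => |x|) M := by simp only [Real.sqrt_sq_eq_abs]

theorem traceNorm_eq_sum_abs_eigenvalues {M : Matrix n n ℂ} (hM : M.IsHermitian) :
    traceNorm M = ∑ i, |hM.eigenvalues i| := by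
  rw [traceNorm, sqrt_conjTranspose_mul_self_eq_cfc_abs hM, trace_cfc_eq_sum_eigenvalues hM]
  simp only [Complex.coe_algebraMap, ← Complex.ofReal_sum, Complex.ofReal_re]

end TraceNorm

theorem norm_map_le_sum_norm_inner_mul_norm {ι 𝕜 E F : Type*} [Fintype ι] [RCLike 𝕜]
    [NormedAddCommGroup E] [InnerProductSpace 𝕜 E] [SeminormedAddCommGroup F] [NormedSpace 𝕜 F]
    (u : OrthonormalBasis ι 𝕜 E) (L : E →ₗ[𝕜] F) (x : E) :
    ‖L x‖ ≤ ∑ i, ‖inner 𝕜 (u i) x‖ * ‖L (u i)‖ :=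
  calc ‖L x‖ = ‖∑ i, inner 𝕜 (u i) x • L (u i)‖ := by
        simp only [← map_smul, ← map_sum, u.sum_repr']
    _ ≤ ∑ i, ‖inner 𝕜 (u i) x‖ * ‖L (u i)‖ := by
        simpa only [norm_smul] using norm_sum_le Finset.univ fun i => inner 𝕜 (u i) x • L (u i)

/-- The expectation value `Re ⟨v|A|v⟩` of a matrix `A` in the (not necessarily normalized)
vector `v`; it is the full value `⟨v|A|v⟩` when `A` is Hermitian. -/
noncomputable def expectation {n : Type*} [Fintype n] (A : Matrix n n ℂ) (v : n → ℂ) : ℝ :=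
  (star v ⬝ᵥ A *ᵥ v).re

section Expectation

variable {n : Type*} [Fintype n]

theorem expectation_sub (A B : Matrix n n ℂ) (v : n → ℂ) :
    expectation (A - B) v = expectation A v - expectation B v := by
  simp only [expectation, sub_mulVec, dotProduct_sub, Complex.sub_re]

theorem trace_pureState_mul (ψ : n → ℂ) (A : Matrix n n ℂ) :
    (pureState ψ * A).trace = star ψ ⬝ᵥ A *ᵥ ψ := by
  rw [pureState, vecMulVec_mul, trace_vecMulVec, dotProduct_comm, dotProduct_mulVec]

theorem expectation_pureState (ψ v : n → ℂ) :
    expectation (pureState ψ) v = ‖star v ⬝ᵥ ψ‖ ^ 2 := by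
  have star_overlap : star ψ ⬝ᵥ v = star (star v ⬝ᵥ ψ) := star_dotProduct _ _
  rw [expectation, pureState, vecMulVec_mulVec, star_overlap, op_smul_eq_smul, dotProduct_smul,
    smul_eq_mul, RCLike.star_def, Complex.conj_mul', ← Complex.ofReal_pow, Complex.ofReal_re]

theorem expectation_conjTranspose_mul_self {m : Type*} [Fintype m] [DecidableEq n]
    (B : Matrix m n ℂ) (x : EuclideanSpace ℂ n) :
    expectation (Bᴴ * B) x = ‖toEuclideanLin B x‖ ^ 2 := by
  rw [← inner_self_eq_norm_sq (𝕜 := ℂ), EuclideanSpace.inner_eq_star_dotProduct,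
    ofLp_toLpLin, toLin'_apply, dotProduct_comm, star_mulVec, ← dotProduct_mulVec, mulVec_mulVec,
    expectation]
  rfl

theorem sum_expectation_orthonormalBasis {ι : Type*} [Fintype ι]
    (u : OrthonormalBasis ι ℂ (EuclideanSpace ℂ n)) (A : Matrix n n ℂ) :
    ∑ i, expectation A (u i) = A.trace.re := by
  classical
  have trace_toEuclideanLin : LinearMap.trace ℂ _ (toEuclideanLin A) = A.trace := by
    rw [toEuclideanLin, toLpLin_eq_toLin, trace_toLin_eq]
  rw [← trace_toEuclideanLin, LinearMap.trace_eq_sum_inner _ u, Complex.re_sum]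
  refine Finset.sum_congr rfl fun i _ => ?_
  rw [EuclideanSpace.inner_eq_star_dotProduct, ofLp_toLpLin, toLin'_apply, dotProduct_comm,
    expectation]

open scoped MatrixOrder in
theorem expectation_le_sq_sum_mul_sqrt {ι : Type*} [Fintype ι]
    (u : OrthonormalBasis ι ℂ (EuclideanSpace ℂ n)) {σ : Matrix n n ℂ} (hσ : σ.PosSemidef)
    (ψ : n → ℂ) :
    expectation σ ψ ≤ (∑ i, ‖star (u i).ofLp ⬝ᵥ ψ‖ * √(expectation σ (u i))) ^ 2 := by
  classical
  obtain ⟨B, rfl⟩ := CStarAlgebra.nonneg_iff_eq_star_mul_self.mp hσ.nonneg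
  have norm_eq_sqrt (x : EuclideanSpace ℂ n) :
      √(expectation (star B * B) x) = ‖toEuclideanLin B x‖ := by
    rw [star_eq_conjTranspose, expectation_conjTranspose_mul_self, Real.sqrt_sq (norm_nonneg _)]
  have inner_eq (i : ι) : inner ℂ (u i) (WithLp.toLp 2 ψ) = star (u i).ofLp ⬝ᵥ ψ := by
    rw [EuclideanSpace.inner_eq_star_dotProduct, dotProduct_comm]
  have triangle := norm_map_le_sum_norm_inner_mul_norm u (toEuclideanLin B) (WithLp.toLp 2 ψ)
  simp only [← norm_eq_sqrt, inner_eq] at triangle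
  exact (Real.sqrt_le_left (by positivity)).mp triangle

end Expectation

/-- With `a i = √(p i)` and `b i = √(q i)`, this bounds the total variation of two probability
distributions `p` and `q` by their fidelity. -/
theorem sum_abs_sq_sub_sq_le {ι : Type*} (s : Finset ι) {a b : ι → ℝ}
    (ha : ∑ i ∈ s, a i ^ 2 = 1) (hb : ∑ i ∈ s, b i ^ 2 = 1) :
    ∑ i ∈ s, |a i ^ 2 - b i ^ 2| ≤ 2 * √(1 - (∑ i ∈ s, a i * b i) ^ 2) := by
  set f := ∑ i ∈ s, a i * b i with hf
  have sum_sub_sq : ∑ i ∈ s, (a i - b i) ^ 2 = 2 - 2 * f := by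
    simp only [sub_sq, Finset.sum_add_distrib, Finset.sum_sub_distrib, mul_assoc,
      ← Finset.mul_sum, ha, hb, ← hf]
    ring
  have sum_add_sq : ∑ i ∈ s, (a i + b i) ^ 2 = 2 + 2 * f := by
    simp only [add_sq, Finset.sum_add_distrib, mul_assoc, ← Finset.mul_sum, ha, hb, ← hf]
    ring
  calc ∑ i ∈ s, |a i ^ 2 - b i ^ 2|
      = ∑ i ∈ s, |a i - b i| * |a i + b i| := by
        simp only [sq_sub_sq, abs_mul, mul_comm]
    _ ≤ √(∑ i ∈ s, |a i - b i| ^ 2) * √(∑ i ∈ s, |a i + b i| ^ 2) :=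
        Real.sum_mul_le_sqrt_mul_sqrt s _ _
    _ = √(2 ^ 2 * (1 - f ^ 2)) := by
        simp only [sq_abs, sum_sub_sq, sum_add_sq]
        rw [← Real.sqrt_mul (sum_sub_sq ▸ Finset.sum_nonneg fun i _ => sq_nonneg _)]
        ring_nf
    _ = 2 * √(1 - f ^ 2) := by
        rw [Real.sqrt_mul (by positivity), Real.sqrt_sq zero_le_two]

theorem posSemidef_pureState {n : Type*} [Finite n] (ψ : n → ℂ) : (pureState ψ).PosSemidef :=
  posSemidef_vecMulVec_self_star ψ

theorem traceNorm_pureState_sub_le {n : Type*} [Fintype n] [DecidableEq n] {ψ : n → ℂ}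
    {σ : Matrix n n ℂ} (hψ : star ψ ⬝ᵥ ψ = 1) (hσ : σ.PosSemidef) (htr : σ.trace = 1) :
    traceNorm (pureState ψ - σ) ≤ 2 * √(1 - (pureState ψ * σ).trace.re) := by
  have hM : (pureState ψ - σ).IsHermitian :=
    (posSemidef_pureState ψ).isHermitian.sub hσ.isHermitian
  let u := hM.eigenvectorBasis
  let a i := ‖star (u i).ofLp ⬝ᵥ ψ‖
  let b i := √(expectation σ (u i))
  have sq_b (i : n) : b i ^ 2 = expectation σ (u i) :=
    Real.sq_sqrt (RCLike.nonneg_iff.mp (hσ.dotProduct_mulVec_nonneg _)).1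
  have eigenvalue_eq (i : n) : hM.eigenvalues i = a i ^ 2 - b i ^ 2 := by
    rw [sq_b, ← expectation_pureState, ← expectation_sub]
    exact hM.eigenvalues_eq i
  have sum_sq_a : ∑ i, a i ^ 2 = 1 := by
    simp only [a, ← expectation_pureState]
    rw [sum_expectation_orthonormalBasis u, pureState, trace_vecMulVec, dotProduct_comm, hψ,
      Complex.one_re]
  have sum_sq_b : ∑ i, b i ^ 2 = 1 := by
    simp only [sq_b]
    rw [sum_expectation_orthonormalBasis u, htr, Complex.one_re]
  calc traceNorm (pureState ψ - σ) = ∑ i, |a i ^ 2 - b i ^ 2| := by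
        simp only [traceNorm_eq_sum_abs_eigenvalues hM, eigenvalue_eq]
    _ ≤ 2 * √(1 - (∑ i, a i * b i) ^ 2) := sum_abs_sq_sub_sq_le _ sum_sq_a sum_sq_b
    _ ≤ 2 * √(1 - (pureState ψ * σ).trace.re) := by
        rw [trace_pureState_mul]
        gcongr
        exact expectation_le_sq_sum_mul_sqrt u hσ ψ

section ReducedStates

variable {ιC ιD : Type}

theorem redC_vec [Fintype ιD] (X : Matrix ιD ιC ℂ) : redC (vec X) = (Xᴴ * X)ᵀ := by
  ext i j
  simp only [redC, of_apply, vec, transpose_apply, mul_apply, conjTranspose_apply, mul_comm]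

theorem redD_vec [Fintype ιC] (X : Matrix ιD ιC ℂ) : redD (vec X) = X * Xᴴ := rfl

theorem posSemidef_redC [Finite ιC] [Fintype ιD] (ξ : ιC × ιD → ℂ) : (redC ξ).PosSemidef := by
  obtain ⟨X, rfl⟩ := vec_bijective.surjective ξ
  rw [redC_vec]
  exact (posSemidef_conjTranspose_mul_self X).transpose

theorem posSemidef_redD [Fintype ιC] [Finite ιD] (ξ : ιC × ιD → ℂ) : (redD ξ).PosSemidef := by
  obtain ⟨X, rfl⟩ := vec_bijective.surjective ξ
  rw [redD_vec]
  exact posSemidef_self_mul_conjTranspose X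

variable [Fintype ιC] [Fintype ιD]

theorem trace_redC (ξ : ιC × ιD → ℂ) : (redC ξ).trace = star ξ ⬝ᵥ ξ := by
  obtain ⟨X, rfl⟩ := vec_bijective.surjective ξ
  rw [redC_vec, trace_transpose, star_vec_dotProduct_vec]

theorem trace_redD (ξ : ιC × ιD → ℂ) : (redD ξ).trace = star ξ ⬝ᵥ ξ := by
  obtain ⟨X, rfl⟩ := vec_bijective.surjective ξ
  rw [redD_vec, trace_mul_comm, star_vec_dotProduct_vec]

theorem trace_pureState_mul_redC_kronecker_redD [DecidableEq ιC] (ξ : ιC × ιD → ℂ) :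
    (pureState ξ * (redC ξ ⊗ₖ redD ξ)).trace = (redC ξ ^ 3).trace := by
  obtain ⟨X, rfl⟩ := vec_bijective.surjective ξ
  calc (pureState (vec X) * (redC (vec X) ⊗ₖ redD (vec X))).trace
      = (Xᴴ * (X * Xᴴ * X * (Xᴴ * X))).trace := by
        rw [trace_pureState_mul, kronecker_mulVec_vec, star_vec_dotProduct_vec, redC_vec,
          redD_vec, transpose_transpose]
    _ = ((Xᴴ * X) ^ 3).trace := by simp only [pow_succ, pow_zero, one_mul, Matrix.mul_assoc]
    _ = (redC (vec X) ^ 3).trace := by rw [redC_vec, ← transpose_pow, trace_transpose]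

end ReducedStates

/-- **Near-product pure states.**  If `ξ` is a pure state on `C ⊗ D` whose reduced state
`ξ^C` has largest eigenvalue at least `1 − ε`, then `Tr[ξ(ξ^C ⊗ ξ^D)] ≥ (1−ε)³ ≥ 1−3ε`
and `‖ξ − ξ^C ⊗ ξ^D‖₁ ≤ 2√(3ε)`. -/
theorem near_product_pure_state
    {ιC ιD : Type} [Fintype ιC] [DecidableEq ιC] [Nonempty ιC]
    [Fintype ιD] [DecidableEq ιD]
    (ξ : ιC × ιD → ℂ) (hξ : star ξ ⬝ᵥ ξ = 1)
    (ε : ℝ) (hε0 : 0 ≤ ε) (hε1 : ε ≤ 1)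
    (hherm : (redC ξ).IsHermitian)
    (hmax : 1 - ε ≤ Finset.univ.sup' Finset.univ_nonempty hherm.eigenvalues) :
    (pureState ξ * (redC ξ ⊗ₖ redD ξ)).trace.re ≥ (1 - ε) ^ 3
    ∧ (1 - ε) ^ 3 ≥ 1 - 3 * ε
    ∧ traceNorm (pureState ξ - redC ξ ⊗ₖ redD ξ) ≤ 2 * Real.sqrt (3 * ε) := by
  obtain ⟨i, -, hi⟩ := Finset.exists_mem_eq_sup' Finset.univ_nonempty hherm.eigenvalues
  rw [hi] at hmax
  have overlap : (1 - ε) ^ 3 ≤ (pureState ξ * (redC ξ ⊗ₖ redD ξ)).trace.re :=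
    calc (1 - ε) ^ 3 ≤ hherm.eigenvalues i ^ 3 := pow_le_pow_left₀ (sub_nonneg.mpr hε1) hmax 3
      _ ≤ (redC ξ ^ 3).trace.re := eigenvalues_pow_le_re_trace_pow (posSemidef_redC ξ) 3 i
      _ = (pureState ξ * (redC ξ ⊗ₖ redD ξ)).trace.re := by
        rw [trace_pureState_mul_redC_kronecker_redD]
  have bernoulli : 1 - 3 * ε ≤ (1 - ε) ^ 3 := by
    convert! one_add_mul_le_pow (by linarith : -2 ≤ -ε) 3 using 1
    push_cast
    ring
  have trace_product : (redC ξ ⊗ₖ redD ξ).trace = 1 := by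
    rw [trace_kronecker, trace_redC, trace_redD, hξ, one_mul]
  refine ⟨overlap, bernoulli, ?_⟩
  calc traceNorm (pureState ξ - redC ξ ⊗ₖ redD ξ)
      ≤ 2 * √(1 - (pureState ξ * (redC ξ ⊗ₖ redD ξ)).trace.re) :=
        traceNorm_pureState_sub_le hξ ((posSemidef_redC ξ).kronecker (posSemidef_redD ξ))
          trace_product
    _ ≤ 2 * √(3 * ε) := by
        gcongr
        linarith
end

section
/- Let T be a finite set, let P and P' be probability distributions on T, let f : T → [0,1], and let 0 < ε ≤ 1/100. If Σ_{t∈T} √(P_t P'_t) f_t ≥ 1 − 3ε, then there exists t ∈ T such that f_t ≥ 1 − 18ε and 3 P_t ≥ P'_t. -/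
/-!
If every `t` with `1 - δ ≤ f t` has `3 * P t < P' t`, then each term `√(P t * P' t) * f t` is at
most the convex combination
`(1 - δ) * ((P t + P' t) / 2) + δ * (P t / 4 + P' t / 2)`.
Where `f t < 1 - δ`, AM-GM already bounds the term by the first summand; where `3 * P t < P' t`,
both `(P t + P' t) / 2` and `P t / 4 + P' t / 2` dominate the square root. Summing over `t` gives
`∑ t, √(P t * P' t) * f t ≤ (1 - δ) + δ * (3 / 4) = 1 - δ / 4`.
-/

theorem sqrt_mul_le_add_div_two {p q : ℝ} (hp : 0 ≤ p) (hq : 0 ≤ q) :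
    √(p * q) ≤ (p + q) / 2 := by
  refine Real.sqrt_le_iff.mpr ⟨by positivity, ?_⟩
  linarith [four_mul_le_sq_add p q]

theorem sqrt_mul_le_of_three_mul_le {p q : ℝ} (hp : 0 ≤ p) (hpq : 3 * p ≤ q) :
    √(p * q) ≤ p / 4 + q / 2 := by
  have hq : 0 ≤ q := by linarith
  have : 0 ≤ q - 3 * p := sub_nonneg.mpr hpq
  refine Real.sqrt_le_iff.mpr ⟨by positivity, ?_⟩
  calc p * q ≤ p * q + (p ^ 2 / 16 + q * (q - 3 * p) / 4) :=
        le_add_of_nonneg_right (by positivity)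
    _ = (p / 4 + q / 2) ^ 2 := by ring

theorem sqrt_mul_mul_le_of_imp {p q x δ : ℝ} (hp : 0 ≤ p) (hq : 0 ≤ q) (hx : x ≤ 1)
    (hδ0 : 0 ≤ δ) (hδ1 : δ ≤ 1) (h : 1 - δ ≤ x → 3 * p ≤ q) :
    √(p * q) * x ≤ (1 - δ) * ((p + q) / 2) + δ * (p / 4 + q / 2) := by
  have : 0 ≤ 1 - δ := sub_nonneg.mpr hδ1
  have amgm : √(p * q) ≤ (p + q) / 2 := sqrt_mul_le_add_div_two hp hq
  rcases le_or_gt (1 - δ) x with hlarge | hsmall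
  · calc √(p * q) * x ≤ √(p * q) := mul_le_of_le_one_right (Real.sqrt_nonneg _) hx
      _ = (1 - δ) * √(p * q) + δ * √(p * q) := by ring
      _ ≤ (1 - δ) * ((p + q) / 2) + δ * (p / 4 + q / 2) := by
        gcongr
        exact sqrt_mul_le_of_three_mul_le hp (h hlarge)
  · calc √(p * q) * x ≤ √(p * q) * (1 - δ) := by gcongr
      _ = (1 - δ) * √(p * q) := mul_comm _ _
      _ ≤ (1 - δ) * ((p + q) / 2) := by gcongr
      _ ≤ (1 - δ) * ((p + q) / 2) + δ * (p / 4 + q / 2) :=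
        le_add_of_nonneg_right (by positivity)

theorem exists_good_type_general {T : Type*} [Fintype T] {P P' f : T → ℝ}
    (hP : ∀ t, 0 ≤ P t) (hPsum : ∑ t, P t = 1) (hP' : ∀ t, 0 ≤ P' t) (hP'sum : ∑ t, P' t = 1)
    (hf : ∀ t, f t ≤ 1) {δ : ℝ} (hδ0 : 0 ≤ δ) (hδ1 : δ ≤ 1)
    (h : 1 - δ / 4 < ∑ t, √(P t * P' t) * f t) :
    ∃ t, 1 - δ ≤ f t ∧ P' t ≤ 3 * P t := by
  by_contra! hbad
  refine h.not_ge ?_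
  calc ∑ t, √(P t * P' t) * f t
      ≤ ∑ t, ((1 - δ) * ((P t + P' t) / 2) + δ * (P t / 4 + P' t / 2)) :=
        Finset.sum_le_sum fun t _ =>
          sqrt_mul_mul_le_of_imp (hP t) (hP' t) (hf t) hδ0 hδ1 fun ht => (hbad t ht).le
    _ = (1 - δ) * ((∑ t, P t + ∑ t, P' t) / 2) + δ * ((∑ t, P t) / 4 + (∑ t, P' t) / 2) := by
        simp only [Finset.sum_add_distrib, ← Finset.mul_sum, ← Finset.sum_div]
    _ = 1 - δ / 4 := by rw [hPsum, hP'sum]; ring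

/-- **Good common type selection.**  If `P`, `P'` are probability distributions on a
finite set `T`, `f : T → [0,1]`, `0 < ε ≤ 1/100` and `∑ √(P_t P'_t) f_t ≥ 1 − 3ε`, then
some `t` satisfies both `f_t ≥ 1 − 18ε` and `3 P_t ≥ P'_t`. -/
theorem exists_good_type
    {T : Type*} [Fintype T]
    (P P' f : T → ℝ)
    (hP : ∀ t, 0 ≤ P t) (hPsum : ∑ t, P t = 1)
    (hP' : ∀ t, 0 ≤ P' t) (hP'sum : ∑ t, P' t = 1)
    (hf0 : ∀ t, 0 ≤ f t) (hf1 : ∀ t, f t ≤ 1)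
    (ε : ℝ) (hε0 : 0 < ε) (hε1 : ε ≤ 1 / 100)
    (h : 1 - 3 * ε ≤ ∑ t, Real.sqrt (P t * P' t) * f t) :
    ∃ t, 1 - 18 * ε ≤ f t ∧ P' t ≤ 3 * P t :=
  exists_good_type_general hP hPsum hP' hP'sum hf1 (by linarith) (by linarith) (by linarith)
end

section
/- Let |ψ'⟩ be a unit vector in A⊗B⊗R, let Π_A, Π_B, Π_R be orthogonal projections on A, B, R respectively, and set p = ⟨ψ'| (Π_A⊗Π_B⊗Π_R) |ψ'⟩. Suppose p > 0 and let ψ be the pure state associated to the unit vector (Π_A⊗Π_B⊗Π_R)|ψ'⟩ / √p. If Π_A ψ'^A Π_A ≤ c·I for some real c > 0, where ψ'^A = Tr_{BR} |ψ'⟩⟨ψ'|, then Tr[(ψ^A)²] ≤ c/p. -/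
open Matrix
open scoped Kronecker ComplexOrder

/-- Reduced state on `A` of a state vector on `A ⊗ (B × R)`. -/
noncomputable def redA {ιA ιB ιR : Type} [Fintype ιB] [Fintype ιR]
    (v : ιA × (ιB × ιR) → ℂ) : Matrix ιA ιA ℂ :=
  Matrix.of fun a a' => ∑ q : ιB × ιR, v (a, q) * star (v (a', q))

/-!
Arrange the amplitudes of a vector on `A ⊗ Q` in a matrix `M`, rows indexed by `A`. Its reduced
state is `M * Mᴴ`, and applying `P ⊗ K` turns `M` into `P * M * Kᵀ`. A contraction `K` on the
traced-out factor can only decrease the reduced state, so the reduced state `X` of the unnormalized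
projected vector satisfies `X ≤ P * ψ'^A * Pᴴ ≤ c`. Multiplying by `X` and taking traces gives
`Tr X² ≤ c * Tr X = c * p`, and normalization divides the left-hand side by `p²`.
-/

section Matrix

open scoped MatrixOrder

variable {m n 𝕜 : Type*} [Fintype n] [RCLike 𝕜]

theorem mul_mul_conjTranspose_mono [Finite m] {A B : Matrix n n 𝕜} (hAB : A ≤ B)
    (C : Matrix m n 𝕜) : C * A * Cᴴ ≤ C * B * Cᴴ := by
  rw [le_iff, ← Matrix.sub_mul, ← Matrix.mul_sub]
  exact (le_iff.mp hAB).mul_mul_conjTranspose_same C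

theorem trace_mul_nonneg {A B : Matrix n n 𝕜} (hA : A.PosSemidef) (hB : B.PosSemidef) :
    0 ≤ (A * B).trace := by
  classical
  obtain ⟨C, rfl⟩ := CStarAlgebra.nonneg_iff_eq_star_mul_self.mp hA.nonneg
  rw [star_eq_conjTranspose, Matrix.mul_assoc, trace_mul_comm]
  exact (hB.mul_mul_conjTranspose_same C).trace_nonneg

theorem trace_mul_self_le [DecidableEq n] {X : Matrix n n 𝕜} (hX : X.PosSemidef) {c : 𝕜}
    (hc : X ≤ c • 1) : (X * X).trace ≤ c * X.trace := by
  have h : 0 ≤ (X * (c • 1 - X)).trace := trace_mul_nonneg hX (le_iff.mp hc)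
  simpa [Matrix.mul_sub] using h

theorem conjTranspose_mul_self_le_one_of_isStarProjection [DecidableEq n] {P : Matrix n n 𝕜}
    (hP : IsStarProjection P) : Pᴴ * P ≤ 1 := by
  rw [← star_eq_conjTranspose, hP.isSelfAdjoint.star_eq, hP.isIdempotentElem.eq]
  exact hP.le_one

end Matrix

section StarProjection

variable {m n R : Type*} [Fintype m] [Fintype n]

theorem isStarProjection_kronecker [CommSemiring R] [StarRing R] {P : Matrix m m R}
    {Q : Matrix n n R} (hP : IsStarProjection P) (hQ : IsStarProjection Q) :
    IsStarProjection (P ⊗ₖ Q) where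
  isIdempotentElem := by
    rw [IsIdempotentElem, ← mul_kronecker_mul, hP.isIdempotentElem.eq, hQ.isIdempotentElem.eq]
  isSelfAdjoint := by
    rw [IsSelfAdjoint, star_eq_conjTranspose, conjTranspose_kronecker, ← star_eq_conjTranspose,
      ← star_eq_conjTranspose, hP.isSelfAdjoint.star_eq, hQ.isSelfAdjoint.star_eq]

theorem star_mulVec_dotProduct_mulVec_of_isStarProjection [NonUnitalSemiring R] [StarRing R]
    {P : Matrix n n R} (hP : IsStarProjection P) (v : n → R) :
    star (P *ᵥ v) ⬝ᵥ (P *ᵥ v) = star v ⬝ᵥ (P *ᵥ v) := by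
  rw [star_mulVec, ← star_eq_conjTranspose, hP.isSelfAdjoint.star_eq, ← dotProduct_mulVec,
    mulVec_mulVec, hP.isIdempotentElem.eq]

end StarProjection

section CoeffMatrix

variable {m m' n n' R : Type*}

/-- The matrix of amplitudes of a vector on a bipartite system, with rows indexed by the first
factor; it is inverse to `M ↦ vec Mᵀ`. -/
def coeffMatrix (v : m × n → R) : Matrix m n R :=
  Matrix.of (Function.curry v)

theorem coeffMatrix_kronecker_mulVec [Fintype m] [Fintype n] [NonUnitalCommSemiring R]
    (P : Matrix m' m R) (K : Matrix n' n R) (v : m × n → R) :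
    coeffMatrix ((P ⊗ₖ K) *ᵥ v) = P * coeffMatrix v * Kᵀ :=
  calc
    coeffMatrix ((P ⊗ₖ K) *ᵥ v) = (K * (coeffMatrix v)ᵀ * Pᵀ)ᵀ :=
      congrArg coeffMatrix (kronecker_mulVec_vec K (coeffMatrix v)ᵀ P)
    _ = P * coeffMatrix v * Kᵀ := by
      simp only [transpose_mul, transpose_transpose, Matrix.mul_assoc]

end CoeffMatrix

section ReducedState

open scoped MatrixOrder

variable {ιA ιA' ιB ιB' ιR ιR' : Type} [Fintype ιB] [Fintype ιR]

theorem redA_eq_coeffMatrix_mul_conjTranspose (v : ιA × (ιB × ιR) → ℂ) :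
    redA v = coeffMatrix v * (coeffMatrix v)ᴴ :=
  rfl

theorem posSemidef_redA [Finite ιA] (v : ιA × (ιB × ιR) → ℂ) : (redA v).PosSemidef :=
  posSemidef_self_mul_conjTranspose (coeffMatrix v)

theorem trace_redA [Fintype ιA] (v : ιA × (ιB × ιR) → ℂ) :
    (redA v).trace = star v ⬝ᵥ v := by
  simp [redA, trace, dotProduct, Fintype.sum_prod_type, mul_comm]

theorem redA_div (v : ιA × (ιB × ιR) → ℂ) (z : ℂ) :
    redA (fun i => v i / z) = (z * star z)⁻¹ • redA v := by
  ext a a'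
  simp only [redA, of_apply, Matrix.smul_apply, smul_eq_mul, Finset.mul_sum, star_div₀]
  refine Finset.sum_congr rfl fun q _ => ?_
  rw [div_mul_div_comm, div_eq_inv_mul]

theorem redA_div_sqrt (v : ιA × (ιB × ιR) → ℂ) {p : ℝ} (hp : 0 ≤ p) :
    redA (fun i => v i / (Real.sqrt p : ℂ)) = ((p⁻¹ : ℝ) : ℂ) • redA v := by
  rw [redA_div, Complex.star_def, Complex.conj_ofReal, ← Complex.ofReal_mul,
    Real.mul_self_sqrt hp, Complex.ofReal_inv]

variable [Fintype ιA] [Fintype ιB'] [Fintype ιR']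

theorem redA_kronecker_mulVec (P : Matrix ιA' ιA ℂ) (K : Matrix (ιB' × ιR') (ιB × ιR) ℂ)
    (v : ιA × (ιB × ιR) → ℂ) :
    redA ((P ⊗ₖ K) *ᵥ v) = P * (coeffMatrix v * (Kᴴ * K)ᵀ * (coeffMatrix v)ᴴ) * Pᴴ := by
  rw [redA_eq_coeffMatrix_mul_conjTranspose, coeffMatrix_kronecker_mulVec]
  simp only [conjTranspose_mul, transpose_mul, conjTranspose_transpose_eq_transpose_conjTranspose,
    Matrix.mul_assoc]

variable [DecidableEq ιB] [DecidableEq ιR]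

theorem redA_kronecker_mulVec_le [Finite ιA'] (P : Matrix ιA' ιA ℂ)
    {K : Matrix (ιB' × ιR') (ιB × ιR) ℂ} (hK : Kᴴ * K ≤ 1) (v : ιA × (ιB × ιR) → ℂ) :
    redA ((P ⊗ₖ K) *ᵥ v) ≤ P * redA v * Pᴴ := by
  have hKT : (Kᴴ * K)ᵀ ≤ 1 := by
    simpa only [le_iff, transpose_sub, transpose_one] using (le_iff.mp hK).transpose
  rw [redA_kronecker_mulVec]
  refine mul_mul_conjTranspose_mono ?_ P
  simpa only [Matrix.mul_one, redA_eq_coeffMatrix_mul_conjTranspose] using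
    mul_mul_conjTranspose_mono hKT (coeffMatrix v)

theorem purity_after_projection_general [Fintype ιA'] [DecidableEq ιA']
    (ψ' : ιA × (ιB × ιR) → ℂ) (P : Matrix ιA' ιA ℂ)
    (K : Matrix (ιB' × ιR') (ιB × ιR) ℂ) (hK : Kᴴ * K ≤ 1) (c p : ℝ)
    (hp : (p : ℂ) = star ((P ⊗ₖ K) *ᵥ ψ') ⬝ᵥ ((P ⊗ₖ K) *ᵥ ψ')) (hppos : 0 < p)
    (hbound : P * redA ψ' * Pᴴ ≤ (c : ℂ) • 1) :
    ((redA fun i => ((P ⊗ₖ K) *ᵥ ψ') i / (Real.sqrt p : ℂ)) *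
      (redA fun i => ((P ⊗ₖ K) *ᵥ ψ') i / (Real.sqrt p : ℂ))).trace.re ≤ c / p := by
  set X := redA ((P ⊗ₖ K) *ᵥ ψ')
  have hX : X ≤ (c : ℂ) • 1 := (redA_kronecker_mulVec_le P hK ψ').trans hbound
  have htrace : (X * X).trace.re ≤ c * p := by
    have h : (X * X).trace ≤ c * X.trace := trace_mul_self_le (posSemidef_redA _) hX
    rw [trace_redA, ← hp, ← Complex.ofReal_mul] at h
    exact (Complex.le_def.mp h).1
  rw [redA_div_sqrt _ hppos.le, Matrix.smul_mul, Matrix.mul_smul, trace_smul, trace_smul,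
    smul_eq_mul, smul_eq_mul, Complex.re_ofReal_mul, Complex.re_ofReal_mul]
  calc
    p⁻¹ * (p⁻¹ * (X * X).trace.re) ≤ p⁻¹ * (p⁻¹ * (c * p)) := by gcongr
    _ = c / p := by field_simp

end ReducedState

/-- **Purity bound after a typical projection.**  Let `|ψ'⟩` be a unit vector on
`A ⊗ B ⊗ R`, `Π_A, Π_B, Π_R` orthogonal projections, `p = ⟨ψ'|Π_A⊗Π_B⊗Π_R|ψ'⟩ > 0`, and
`ψ` the pure state of the renormalized vector `(Π_A⊗Π_B⊗Π_R)|ψ'⟩/√p`.  If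
`Π_A ψ'^A Π_A ≤ c·I` then `Tr[(ψ^A)²] ≤ c/p`. -/
theorem purity_after_projection
    {ιA ιB ιR : Type} [Fintype ιA] [DecidableEq ιA] [Fintype ιB] [DecidableEq ιB]
    [Fintype ιR] [DecidableEq ιR]
    (ψ' : ιA × (ιB × ιR) → ℂ) (hψ' : star ψ' ⬝ᵥ ψ' = 1)
    (PA : Matrix ιA ιA ℂ) (hAh : PA.IsHermitian) (hAi : PA * PA = PA)
    (PB : Matrix ιB ιB ℂ) (hBh : PB.IsHermitian) (hBi : PB * PB = PB)
    (PR : Matrix ιR ιR ℂ) (hRh : PR.IsHermitian) (hRi : PR * PR = PR)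
    (c : ℝ) (hc : 0 < c)
    (p : ℝ)
    (hp : (p : ℂ) = star ψ' ⬝ᵥ ((PA ⊗ₖ (PB ⊗ₖ PR)).mulVec ψ'))
    (hppos : 0 < p)
    (hbound : ((c : ℂ) • (1 : Matrix ιA ιA ℂ) - PA * redA ψ' * PA).PosSemidef) :
    ((redA fun i => ((PA ⊗ₖ (PB ⊗ₖ PR)).mulVec ψ') i / (Real.sqrt p : ℂ)) *
      (redA fun i => ((PA ⊗ₖ (PB ⊗ₖ PR)).mulVec ψ') i / (Real.sqrt p : ℂ))).trace.re
      ≤ c / p := by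
  have hA : IsStarProjection PA := ⟨hAi, hAh⟩
  have hBR : IsStarProjection (PB ⊗ₖ PR) := isStarProjection_kronecker ⟨hBi, hBh⟩ ⟨hRi, hRh⟩
  have hABR : IsStarProjection (PA ⊗ₖ (PB ⊗ₖ PR)) := isStarProjection_kronecker hA hBR
  rw [← star_mulVec_dotProduct_mulVec_of_isStarProjection hABR] at hp
  exact purity_after_projection_general ψ' PA (PB ⊗ₖ PR)
    (conjTranspose_mul_self_le_one_of_isStarProjection hBR) c p hp hppos (by rwa [hAh.eq])
end
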